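/- Let k ≥ 1 and n ≥ 1 be integers, let G' be a graph with a vertex v such that for every integer r ≥ 1 the divisor gon_r(G')·v realises the r-th gonality of G', and let G be the graph obtained from G' by attaching a complete graph K_n: add n new vertices pairwise joined by exactly one edge, and join v to each of the n new vertices by exactly k+1 edges. Let D be an effective v-reduced divisor on G, and set D' = deg(D|_{G'})·v + D|_{K_n}. Then the rank of D on G is at most the rank of D' on G (and D and D' have the same degree). -/

import Mathlib

open Finset

variable {V : Type*} [Fintype V] [DecidableEq V]

/-- A finite loopless multigraph on vertex type `V`, given by symmetric edge multiplicities. -/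
structure Multigraph (V : Type*) [Fintype V] [DecidableEq V] where
  mult : V → V → ℕ
  symm : ∀ u v, mult u v = mult v u
  loopless : ∀ v, mult v v = 0

namespace Multigraph

def Adj (G : Multigraph V) (u v : V) : Prop := 0 < G.mult u v

/-- A graph is connected. -/
def Connected (G : Multigraph V) : Prop :=
  Nonempty V ∧ ∀ u v : V, Relation.ReflTransGen G.Adj u v

/-- Valence of a vertex. -/
def valence (G : Multigraph V) (v : V) : ℕ := ∑ u, G.mult v u

/-- The Laplacian applied to an integer-valued function on the vertices. -/
def laplacian (G : Multigraph V) (f : V → ℤ) : V → ℤ :=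
  fun w => ∑ u, (G.mult w u : ℤ) * (f w - f u)

/-- Degree of a divisor. -/
def degree (D : V → ℤ) : ℤ := ∑ v, D v

/-- A divisor is effective if all coefficients are nonnegative. -/
def Effective (D : V → ℤ) : Prop := ∀ v, 0 ≤ D v

/-- Linear equivalence of divisors: they differ by a sequence of chip-firing moves,
equivalently by a Laplacian of an integer function. -/
def LinEquiv (G : Multigraph V) (D D' : V → ℤ) : Prop :=
  ∃ f : V → ℤ, D' = D - G.laplacian f

/-- A divisor is winnable if it is linearly equivalent to an effective divisor. -/
def Winnable (G : Multigraph V) (D : V → ℤ) : Prop :=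
  ∃ E : V → ℤ, Effective E ∧ G.LinEquiv D E

/-- The Baker–Norine rank of a divisor: the largest `r` such that `D - E` is winnable for
every effective divisor `E` of degree `r` (the defining set contains all negative integers,
and its supremum is `-1` precisely when `D` itself is not winnable). -/
noncomputable def rank (G : Multigraph V) (D : V → ℤ) : ℤ :=
  sSup {r : ℤ | ∀ E : V → ℤ, Effective E → degree E = r → G.Winnable (fun w => D w - E w)}

/-- The `k`-th gonality of a graph: the smallest degree of a divisor of rank `k`. -/
noncomputable def gonality (G : Multigraph V) (k : ℤ) : ℤ :=
  sInf {d : ℤ | ∃ D : V → ℤ, G.rank D = k ∧ degree D = d}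

/-- A graph is gonality-tight if its second gonality exceeds its first by exactly 1. -/
def GonalityTight (G : Multigraph V) : Prop :=
  G.gonality 2 = G.gonality 1 + 1

/-- A divisor realises the `k`-th gonality if it has rank `k` and degree `gon_k(G)`. -/
def Realises (G : Multigraph V) (k : ℤ) (D : V → ℤ) : Prop :=
  G.rank D = k ∧ degree D = G.gonality k

/-- A divisor is `v`-reduced: nonnegative away from `v`, and set-firing any nonempty set of
vertices not containing `v` creates a negative coefficient inside the set. -/
def Reduced (G : Multigraph V) (v : V) (D : V → ℤ) : Prop :=
  (∀ w, w ≠ v → 0 ≤ D w) ∧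
    ∀ U : Finset V, U.Nonempty → v ∉ U →
      ∃ w ∈ U, D w - ∑ u ∈ Uᶜ, (G.mult w u : ℤ) < 0

/-- The genus (first Betti number) of a graph: `|E| - |V| + 1`. -/
def genus (G : Multigraph V) : ℤ :=
  ((∑ u, ∑ v, G.mult u v : ℕ) : ℤ) / 2 - Fintype.card V + 1

/-- The canonical divisor of a graph. -/
def canonical (G : Multigraph V) : V → ℤ :=
  fun w => (G.valence w : ℤ) - 2

/-- The subgraph induced on a set `S` of vertices (with all edges among `S`). -/
def induce (G : Multigraph V) (S : Finset V) : Multigraph {x // x ∈ S} where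
  mult a b := G.mult a b
  symm a b := G.symm a b
  loopless a := G.loopless a

/-- `G.SeparatedBy u w v` means every path from `w` to `v` passes through `u`. -/
def SeparatedBy (G : Multigraph V) (u w v : V) : Prop :=
  ¬ Relation.ReflTransGen (fun x y => G.Adj x y ∧ x ≠ u ∧ y ≠ u) w v

end Multigraph

/-- Size of the `i`-th level of a quasi-banana graph: level `0` has a single vertex. -/
def qbSize (q : ℕ → ℕ) (i : ℕ) : ℕ := if i = 0 then 1 else q i

/-- `ℓ` is a quasi-banana labelling of `G` exhibiting `G ≅ QB_m(q_1, …, q_m)`: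
`ℓ` is a bijection onto the pairs `(i, j)` with `i ≤ m`, `1 ≤ j ≤ qbSize q i`
(vertex `u_{i,j}` is the vertex labelled `(i,j)`), and the edge multiplicities are:
one edge between distinct vertices of the same level, `(∑_{k=1}^{i} q_k) + 2` edges
between `u_{i,1}` and each `u_{i+1,j}`, and no other edges. -/
def Multigraph.IsQBLabelling (G : Multigraph V) (m : ℕ) (q : ℕ → ℕ) (ℓ : V → ℕ × ℕ) : Prop :=
  (∀ i, 1 ≤ i → i ≤ m → 0 < q i) ∧
  Function.Injective ℓ ∧
  (∀ v : V, (ℓ v).1 ≤ m ∧ 1 ≤ (ℓ v).2 ∧ (ℓ v).2 ≤ qbSize q (ℓ v).1) ∧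
  (∀ i j : ℕ, i ≤ m → 1 ≤ j → j ≤ qbSize q i → ∃ v, ℓ v = (i, j)) ∧
  (∀ v w : V, v ≠ w → G.mult v w =
    if (ℓ v).1 = (ℓ w).1 then 1
    else if (ℓ v).1 + 1 = (ℓ w).1 ∧ (ℓ v).2 = 1 then (∑ i ∈ Finset.Icc 1 (ℓ v).1, q i) + 2
    else if (ℓ w).1 + 1 = (ℓ v).1 ∧ (ℓ w).2 = 1 then (∑ i ∈ Finset.Icc 1 (ℓ w).1, q i) + 2
    else 0)

/-- A graph is a quasi-banana graph if it is isomorphic to some `QB_m(N)`. -/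
def Multigraph.IsQuasiBanana (G : Multigraph V) : Prop :=
  ∃ (m : ℕ) (q : ℕ → ℕ) (ℓ : V → ℕ × ℕ), G.IsQBLabelling m q ℓ

/-- The graph obtained from `G'` by attaching a complete graph `K_n`: `n` new vertices
pairwise joined by exactly one edge, each joined to `v` by exactly `k+1` edges. -/
def attachComplete (G' : Multigraph V) (v : V) (k n : ℕ) : Multigraph (V ⊕ Fin n) where
  mult x y :=
    match x, y with
    | Sum.inl a, Sum.inl b => G'.mult a b
    | Sum.inl a, Sum.inr _ => if a = v then k + 1 else 0
    | Sum.inr _, Sum.inl b => if b = v then k + 1 else 0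
    | Sum.inr i, Sum.inr j => if i = j then 0 else 1
  symm := by
    rintro (a | i) (b | j)
    · exact G'.symm a b
    · rfl
    · rfl
    · by_cases h : i = j
      · simp [h]
      · simp [h, Ne.symm h]
  loopless := by
    rintro (a | i)
    · exact G'.loopless a
    · simp

/-!
Let `Γ` be `G` with further vertices attached at `v` only, and let `L` be the Laplacian of `Γ` on
firing scripts supported on the attached vertices. A script `h` on them turns `C` into `C - L h`
and sends `degree (L h)` chips to `v`. Among the scripts with `L h ≤ C` this number is at most
`degree C`, so it has a maximum `m`, and, whatever the divisor `A` on `G` is, `A + C` is winnable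
on `Γ` exactly when `A + m·v` is winnable on `G`.

Now let `A + C` have rank at least `r`, let `E₁ + E₂` be effective of degree `r`, and take `m` for
`C - E₂`. Letting `E₁` vary shows that `A + m·v` has rank at least `degree E₁` on `G`. Since the
multiples of `v` realise all the gonalities, so does `(degree A + m)·v`, and hence
`(degree A)·v + C - E₁ - E₂` is winnable on `Γ`.
-/

namespace Multigraph

/-! ### Divisors and winnability -/

section Divisor

variable {α : Type*} [Fintype α]

theorem degree_add (D E : α → ℤ) : degree (D + E) = degree D + degree E :=
  Finset.sum_add_distrib

theorem degree_sub (D E : α → ℤ) : degree (D - E) = degree D - degree E :=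
  Finset.sum_sub_distrib D E

theorem degree_single [DecidableEq α] (v : α) (d : ℤ) : degree (Pi.single v d) = d := by
  simp [degree]

theorem degree_mono {D E : α → ℤ} (h : D ≤ E) : degree D ≤ degree E :=
  Finset.sum_le_sum fun w _ => h w

theorem degree_sumElim {β : Type*} [Fintype β] (A : α → ℤ) (C : β → ℤ) :
    degree (Sum.elim A C) = degree A + degree C :=
  Fintype.sum_sum_type _

theorem Effective.degree_nonneg {D : α → ℤ} (h : Effective D) : 0 ≤ degree D :=
  Finset.sum_nonneg fun w _ => h w

theorem Effective.eq_zero_of_degree_eq_zero {D : α → ℤ} (h : Effective D) (hD : degree D = 0) :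
    D = 0 :=
  (Fintype.sum_eq_zero_iff_of_nonneg h).1 hD

end Divisor

theorem effective_single {α : Type*} [DecidableEq α] (v : α) {d : ℤ} (hd : 0 ≤ d) :
    Effective (Pi.single v d) :=
  show (0 : α → ℤ) ≤ Pi.single v d from Pi.single_nonneg.2 hd

theorem laplacian_add (G : Multigraph V) (f g : V → ℤ) :
    G.laplacian (f + g) = G.laplacian f + G.laplacian g := by
  ext w
  simp only [laplacian, Pi.add_apply, ← Finset.sum_add_distrib]
  exact Finset.sum_congr rfl fun u _ => by ring

theorem degree_laplacian (G : Multigraph V) (f : V → ℤ) : degree (G.laplacian f) = 0 := by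
  have antisymm : degree (G.laplacian f) = -degree (G.laplacian f) := by
    calc ∑ w, ∑ u, (G.mult w u : ℤ) * (f w - f u)
        = ∑ u, ∑ w, (G.mult w u : ℤ) * (f w - f u) := Finset.sum_comm
      _ = ∑ u, ∑ w, -((G.mult u w : ℤ) * (f u - f w)) := by
          refine Finset.sum_congr rfl fun u _ => Finset.sum_congr rfl fun w _ => ?_
          rw [G.symm w u]
          ring
      _ = -∑ u, ∑ w, (G.mult u w : ℤ) * (f u - f w) := by simp only [Finset.sum_neg_distrib]
  linarith

theorem winnable_iff_exists_laplacian_le (G : Multigraph V) (D : V → ℤ) :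
    G.Winnable D ↔ ∃ f, G.laplacian f ≤ D := by
  constructor
  · rintro ⟨_, hE, f, rfl⟩
    exact ⟨f, fun w => sub_nonneg.1 (hE w)⟩
  · rintro ⟨f, hf⟩
    exact ⟨_, fun w => sub_nonneg.2 (hf w), f, rfl⟩

theorem Effective.winnable {D : V → ℤ} (h : Effective D) (G : Multigraph V) : G.Winnable D :=
  ⟨D, h, 0, by ext; simp [laplacian]⟩

theorem Winnable.mono {G : Multigraph V} {D D' : V → ℤ} (h : G.Winnable D) (hle : D ≤ D') :
    G.Winnable D' := by
  obtain ⟨f, hf⟩ := (G.winnable_iff_exists_laplacian_le D).1 h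
  exact (G.winnable_iff_exists_laplacian_le D').2 ⟨f, hf.trans hle⟩

theorem Winnable.degree_nonneg {G : Multigraph V} {D : V → ℤ} (h : G.Winnable D) :
    0 ≤ degree D := by
  obtain ⟨f, hf⟩ := (G.winnable_iff_exists_laplacian_le D).1 h
  exact (G.degree_laplacian f).symm.trans_le (degree_mono hf)

/-! ### Rank and gonality -/

/-- The divisor `D` has rank at least `r`, phrased without the supremum in the definition of
`rank`; every negative `r` qualifies. See `le_rank_iff`. -/
def HasRankGE (G : Multigraph V) (D : V → ℤ) (r : ℤ) : Prop :=
  ∀ E : V → ℤ, Effective E → degree E = r → G.Winnable (D - E)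

theorem hasRankGE_of_neg (G : Multigraph V) (D : V → ℤ) {r : ℤ} (hr : r < 0) :
    G.HasRankGE D r :=
  fun _ hE hdeg => absurd (hdeg ▸ hE.degree_nonneg) hr.not_ge

theorem HasRankGE.sub_single {G : Multigraph V} {D : V → ℤ} {r d : ℤ} (h : G.HasRankGE D (r + d))
    (hd : 0 ≤ d) (v : V) : G.HasRankGE (D - Pi.single v d) r := by
  intro E hE hdeg
  have hwin := h (Pi.single v d + E) (fun w => add_nonneg (effective_single v hd w) (hE w))
    (by rw [degree_add, degree_single, hdeg, add_comm])
  rwa [sub_sub]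

theorem HasRankGE.mono {G : Multigraph V} {D D' : V → ℤ} {r : ℤ} (h : G.HasRankGE D r)
    (hle : D ≤ D') : G.HasRankGE D' r :=
  fun E hE hdeg => (h E hE hdeg).mono (sub_le_sub_right hle E)

section Nonempty

variable [Nonempty V]

theorem HasRankGE.anti {G : Multigraph V} {D : V → ℤ} {r s : ℤ} (h : G.HasRankGE D r)
    (hsr : s ≤ r) : G.HasRankGE D s := by
  obtain ⟨v⟩ := ‹Nonempty V›
  have hd : 0 ≤ r - s := sub_nonneg.2 hsr
  rw [← add_sub_cancel s r] at h
  exact (h.sub_single hd v).mono (sub_le_self D (effective_single v hd))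

theorem HasRankGE.le_degree {G : Multigraph V} {D : V → ℤ} {r : ℤ} (h : G.HasRankGE D r)
    (hr : 0 ≤ r) : r ≤ degree D := by
  obtain ⟨v⟩ := ‹Nonempty V›
  have hdeg := (h _ (effective_single v hr) (degree_single v r)).degree_nonneg
  rwa [degree_sub, degree_single, sub_nonneg] at hdeg

theorem bddAbove_hasRankGE (G : Multigraph V) (D : V → ℤ) : BddAbove {r | G.HasRankGE D r} := by
  refine ⟨max 0 (degree D), fun r hr => ?_⟩
  rcases le_total r 0 with hneg | hnonneg
  · exact le_max_of_le_left hneg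
  · exact le_max_of_le_right (HasRankGE.le_degree hr hnonneg)

theorem le_rank_iff {G : Multigraph V} {D : V → ℤ} {r : ℤ} :
    r ≤ G.rank D ↔ G.HasRankGE D r := by
  have hrank : G.HasRankGE D (G.rank D) :=
    Int.csSup_mem ⟨-1, G.hasRankGE_of_neg D neg_one_lt_zero⟩ (G.bddAbove_hasRankGE D)
  exact ⟨hrank.anti, fun h => le_csSup (G.bddAbove_hasRankGE D) h⟩

theorem zero_le_rank_iff {G : Multigraph V} {D : V → ℤ} : 0 ≤ G.rank D ↔ G.Winnable D := by
  rw [le_rank_iff]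
  constructor
  · intro h
    simpa only [sub_zero] using h 0 (fun _ => le_rfl) Finset.sum_const_zero
  · intro h E hE hdeg
    rwa [hE.eq_zero_of_degree_eq_zero hdeg, sub_zero]

theorem rank_mono (G : Multigraph V) : Monotone G.rank :=
  fun _ _ hle => le_rank_iff.2 ((le_rank_iff.1 le_rfl).mono hle)

theorem le_degree_of_le_rank {G : Multigraph V} {D : V → ℤ} {r : ℤ} (hr : 0 ≤ r)
    (h : r ≤ G.rank D) : r ≤ degree D :=
  (le_rank_iff.1 h).le_degree hr

theorem exists_rank_eq_and_degree_le {G : Multigraph V} {D : V → ℤ} {r : ℤ} (hr : 0 ≤ r)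
    (h : r ≤ G.rank D) : ∃ B, G.rank B = r ∧ degree B ≤ degree D := by
  obtain ⟨_, ⟨B, hB, rfl⟩, hmin⟩ :=
    Int.exists_least_of_bdd (P := fun d => ∃ B, r ≤ G.rank B ∧ degree B = d)
      ⟨r, by rintro _ ⟨A, hA, rfl⟩; exact le_degree_of_le_rank hr hA⟩ ⟨_, D, h, rfl⟩
  refine ⟨B, le_antisymm (not_lt.1 fun hlt => ?_) hB, hmin _ ⟨D, h, rfl⟩⟩
  -- Otherwise a chip can be removed from `B` without the rank dropping below `r`.
  obtain ⟨v⟩ := ‹Nonempty V›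
  have hsub : r ≤ G.rank (B - Pi.single v 1) :=
    le_rank_iff.2 ((le_rank_iff.1 hlt).sub_single zero_le_one v)
  have hle := hmin _ ⟨_, hsub, rfl⟩
  rw [degree_sub, degree_single] at hle
  linarith

theorem gonality_le_degree {G : Multigraph V} {D : V → ℤ} {r : ℤ} (hr : 0 ≤ r)
    (h : r ≤ G.rank D) : G.gonality r ≤ degree D := by
  obtain ⟨B, hB, hBD⟩ := exists_rank_eq_and_degree_le hr h
  have hbdd : BddBelow {d | ∃ A, G.rank A = r ∧ degree A = d} :=
    ⟨r, by rintro _ ⟨A, hA, rfl⟩; exact le_degree_of_le_rank hr hA.ge⟩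
  exact (csInf_le hbdd ⟨B, hB, rfl⟩).trans hBD

end Nonempty

theorem rank_le_rank_single_degree {G : Multigraph V} {v : V}
    (hv : ∀ r : ℤ, 1 ≤ r → r ≤ G.rank (Pi.single v (G.gonality r))) (D : V → ℤ) :
    G.rank D ≤ G.rank (Pi.single v (degree D)) := by
  have : Nonempty V := ⟨v⟩
  refine le_of_forall_le fun r hr => ?_
  rcases lt_trichotomy r 0 with hneg | rfl | hpos
  · exact le_rank_iff.2 (G.hasRankGE_of_neg _ hneg)
  · have hdeg := (zero_le_rank_iff.1 hr).degree_nonneg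
    exact zero_le_rank_iff.2 ((effective_single v hdeg).winnable G)
  · exact (hv r hpos).trans <| G.rank_mono <| Pi.single_mono v <| gonality_le_degree hpos.le hr

/-! ### Attaching vertices at `v` -/

section Attachment

variable {W : Type*} [Fintype W] [DecidableEq W]

/-- `Γ` is obtained from `G` by adding the vertices `W`, which may be joined to each other and to
`v` in any way, but to no other vertex of `G`. -/
structure IsAttachment (Γ : Multigraph (V ⊕ W)) (G : Multigraph V) (v : V) : Prop where
  mult_inl_inl : ∀ a b, Γ.mult (Sum.inl a) (Sum.inl b) = G.mult a b
  mult_inl_inr : ∀ a w, a ≠ v → Γ.mult (Sum.inl a) (Sum.inr w) = 0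

/-- The Laplacian of `Γ` with Dirichlet boundary condition on `V`: the chips lost by the vertices
in `W` when the script `h` is fired on `W` and no vertex in `V` fires. -/
def dirichletLaplacian (Γ : Multigraph (V ⊕ W)) (h : W → ℤ) : W → ℤ :=
  Γ.laplacian (Sum.elim 0 h) ∘ Sum.inr

namespace IsAttachment

variable {Γ : Multigraph (V ⊕ W)} {G : Multigraph V} {v : V}

theorem laplacian_sumElim_const (hΓ : Γ.IsAttachment G v) (g : V → ℤ) :
    Γ.laplacian (Sum.elim g fun _ => g v) = Sum.elim (G.laplacian g) 0 := by
  have mult_mul_sub (a : V) (w : W) : (Γ.mult (Sum.inl a) (Sum.inr w) : ℤ) * (g a - g v) = 0 := by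
    rcases eq_or_ne a v with rfl | ha
    · rw [sub_self, mul_zero]
    · rw [hΓ.mult_inl_inr a w ha, Nat.cast_zero, zero_mul]
  ext (a | w)
  · simp [laplacian, hΓ.mult_inl_inl, mult_mul_sub]
  · have mult_mul_sub' (a : V) : (Γ.mult (Sum.inr w) (Sum.inl a) : ℤ) * (g v - g a) = 0 := by
      rw [Γ.symm, ← neg_sub, mul_neg, mult_mul_sub, neg_zero]
    simp [laplacian, mult_mul_sub']

theorem laplacian_sumElim_zero (hΓ : Γ.IsAttachment G v) (h : W → ℤ) :
    Γ.laplacian (Sum.elim 0 h) =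
      Sum.elim (-Pi.single v (degree (Γ.dirichletLaplacian h))) (Γ.dirichletLaplacian h) := by
  have off_v (a : V) (ha : a ≠ v) : Γ.laplacian (Sum.elim 0 h) (Sum.inl a) = 0 := by
    simp [laplacian, hΓ.mult_inl_inr a _ ha]
  have at_v : Γ.laplacian (Sum.elim 0 h) (Sum.inl v) = -degree (Γ.dirichletLaplacian h) := by
    have hdeg := Γ.degree_laplacian (Sum.elim 0 h)
    rw [degree, Fintype.sum_sum_type, Fintype.sum_eq_single v off_v] at hdeg
    exact eq_neg_of_add_eq_zero_left hdeg
  ext (a | w)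
  · rcases eq_or_ne a v with rfl | ha
    · simpa using at_v
    · simpa [ha] using off_v a ha
  · rfl

theorem laplacian_sumElim (hΓ : Γ.IsAttachment G v) (g : V → ℤ) (h : W → ℤ) :
    Γ.laplacian (Sum.elim g fun w => g v + h w) =
      Sum.elim (G.laplacian g - Pi.single v (degree (Γ.dirichletLaplacian h)))
        (Γ.dirichletLaplacian h) := by
  have split : (Sum.elim g fun w => g v + h w) =
      Sum.elim g (fun _ => g v) + Sum.elim (0 : V → ℤ) h := by
    ext (a | w) <;> simp
  rw [split, laplacian_add, hΓ.laplacian_sumElim_const, hΓ.laplacian_sumElim_zero]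
  ext (a | w) <;> simp [sub_eq_add_neg]

theorem winnable_sumElim_iff (hΓ : Γ.IsAttachment G v) (A : V → ℤ) (C : W → ℤ) :
    Γ.Winnable (Sum.elim A C) ↔ ∃ h, Γ.dirichletLaplacian h ≤ C ∧
      G.Winnable (A + Pi.single v (degree (Γ.dirichletLaplacian h))) := by
  have laplacian_le_iff (g : V → ℤ) (h : W → ℤ) :
      Γ.laplacian (Sum.elim g fun w => g v + h w) ≤ Sum.elim A C ↔
        Γ.dirichletLaplacian h ≤ C ∧
          G.laplacian g ≤ A + Pi.single v (degree (Γ.dirichletLaplacian h)) := by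
    rw [hΓ.laplacian_sumElim, Sum.elim_le_elim_iff, sub_le_iff_le_add, and_comm]
  simp only [winnable_iff_exists_laplacian_le]
  constructor
  · rintro ⟨f, hf⟩
    refine ⟨fun w => f (Sum.inr w) - f (Sum.inl v), ?_⟩
    have split : f = Sum.elim (f ∘ Sum.inl) fun w =>
        (f ∘ Sum.inl) v + (f (Sum.inr w) - f (Sum.inl v)) := by
      ext (a | w) <;> simp
    rw [split, laplacian_le_iff] at hf
    exact ⟨hf.1, _, hf.2⟩
  · rintro ⟨h, hC, g, hA⟩
    exact ⟨_, (laplacian_le_iff g h).2 ⟨hC, hA⟩⟩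

theorem exists_forall_winnable_sumElim_iff (hΓ : Γ.IsAttachment G v) {A₀ : V → ℤ} {C : W → ℤ}
    (hwin : Γ.Winnable (Sum.elim A₀ C)) :
    ∃ m : ℤ, ∀ A, Γ.Winnable (Sum.elim A C) ↔ G.Winnable (A + Pi.single v m) := by
  obtain ⟨h₀, hh₀, -⟩ := (hΓ.winnable_sumElim_iff A₀ C).1 hwin
  obtain ⟨_, ⟨h, hC, rfl⟩, hmax⟩ :=
    Int.exists_greatest_of_bdd
      (P := fun m => ∃ h, Γ.dirichletLaplacian h ≤ C ∧ degree (Γ.dirichletLaplacian h) = m)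
      ⟨degree C, by rintro _ ⟨h, hC, rfl⟩; exact degree_mono hC⟩ ⟨_, h₀, hh₀, rfl⟩
  refine ⟨degree (Γ.dirichletLaplacian h), fun A => ?_⟩
  rw [hΓ.winnable_sumElim_iff]
  constructor
  · rintro ⟨h', hC', hA⟩
    exact hA.mono (add_le_add_right (Pi.single_mono v (hmax _ ⟨h', hC', rfl⟩)) A)
  · exact fun hA => ⟨h, hC, hA⟩

theorem rank_le_rank_sumElim_single_degree (hΓ : Γ.IsAttachment G v)
    (hv : ∀ A, G.rank A ≤ G.rank (Pi.single v (degree A))) (A : V → ℤ) (C : W → ℤ) :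
    Γ.rank (Sum.elim A C) ≤ Γ.rank (Sum.elim (Pi.single v (degree A)) C) := by
  have : Nonempty V := ⟨v⟩
  refine le_of_forall_le fun r hr => le_rank_iff.2 fun E hE hdeg => ?_
  rw [le_rank_iff] at hr
  obtain ⟨E₁, E₂, rfl⟩ : ∃ E₁ E₂, E = Sum.elim E₁ E₂ := ⟨_, _, (Sum.elim_comp_inl_inr E).symm⟩
  have hwin (E₁' : V → ℤ) (hE₁' : Effective E₁') (hdeg' : degree E₁' = degree E₁) :
      Γ.Winnable (Sum.elim (A - E₁') (C - E₂)) := by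
    rw [Sum.elim_sub_sub]
    refine hr _ (Sum.rec hE₁' fun w => hE (Sum.inr w)) ?_
    rw [← hdeg, degree_sumElim, degree_sumElim, hdeg']
  have hE₁ : Effective E₁ := fun a => hE (Sum.inl a)
  obtain ⟨m, hm⟩ := hΓ.exists_forall_winnable_sumElim_iff (hwin E₁ hE₁ rfl)
  have hrank : degree E₁ ≤ G.rank (A + Pi.single v m) := le_rank_iff.2 fun E₁' hE₁' hdeg' => by
    rw [← sub_add_eq_add_sub]
    exact (hm _).1 (hwin E₁' hE₁' hdeg')
  have hrank' : degree E₁ ≤ G.rank (Pi.single v (degree A) + Pi.single v m) := by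
    simpa only [degree_add, degree_single, Pi.single_add] using hrank.trans (hv _)
  rw [← Sum.elim_sub_sub, hm, sub_add_eq_add_sub]
  exact le_rank_iff.1 hrank' E₁ hE₁ rfl

end IsAttachment

end Attachment

theorem isAttachment_attachComplete (G : Multigraph V) (v : V) (k n : ℕ) :
    (attachComplete G v k n).IsAttachment G v where
  mult_inl_inl _ _ := rfl
  mult_inl_inr _ _ ha := if_neg ha

end Multigraph

theorem stmt17_general {W : Type*} [Fintype W] [DecidableEq W] {Γ : Multigraph (V ⊕ W)}
    {G' : Multigraph V} {v : V} (hΓ : Γ.IsAttachment G' v)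
    (hreal : ∀ r : ℤ, 1 ≤ r → G'.Realises r (fun w => if w = v then G'.gonality r else 0))
    (D : V ⊕ W → ℤ) :
    Γ.rank D ≤
      Γ.rank (Sum.elim (fun a => if a = v then ∑ x : V, D (Sum.inl x) else 0)
        (fun i => D (Sum.inr i))) ∧
    Multigraph.degree D =
      Multigraph.degree (Sum.elim (fun a => if a = v then ∑ x : V, D (Sum.inl x) else 0)
        (fun i => D (Sum.inr i))) := by
  have ite_eq_single (d : ℤ) : (fun w => if w = v then d else 0) = Pi.single v d :=
    funext fun w => (Pi.single_apply v d w).symm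
  simp only [ite_eq_single] at hreal ⊢
  have hv := Multigraph.rank_le_rank_single_degree fun r hr => (hreal r hr).1.ge
  obtain ⟨A, C, rfl⟩ : ∃ A C, D = Sum.elim A C := ⟨_, _, (Sum.elim_comp_inl_inr D).symm⟩
  refine ⟨hΓ.rank_le_rank_sumElim_single_degree hv A C, ?_⟩
  simp only [Multigraph.degree_sumElim, Multigraph.degree_single]
  rfl

/-- For `G` obtained from `G'` by attaching `K_n` to `v` along `k+1`
edges (with `gon_r(G')·v` realising every gonality of `G'`), and `D` an effective
`v`-reduced divisor on `G`, the rank of `D` is at most the rank of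
`D' = deg(D|_{G'})·v + D|_{K_n}`, and `D` and `D'` have the same degree. -/
theorem stmt17 (G' : Multigraph V) (hG' : G'.Connected) (v : V)
    (k n : ℕ) (hk : 1 ≤ k) (hn : 1 ≤ n)
    (hreal : ∀ r : ℤ, 1 ≤ r →
      G'.Realises r (fun w => if w = v then G'.gonality r else 0))
    (D : V ⊕ Fin n → ℤ) (hDeff : Multigraph.Effective D)
    (hDred : (attachComplete G' v k n).Reduced (Sum.inl v) D) :
    (attachComplete G' v k n).rank D ≤
      (attachComplete G' v k n).rank
        (Sum.elim (fun a => if a = v then ∑ x : V, D (Sum.inl x) else 0)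
          (fun i => D (Sum.inr i))) ∧
    Multigraph.degree D =
      Multigraph.degree
        (Sum.elim (fun a => if a = v then ∑ x : V, D (Sum.inl x) else 0)
          (fun i => D (Sum.inr i))) := by
  exact stmt17_general (G'.isAttachment_attachComplete v k n) hreal D
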